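/- arXiv:1610.06833 — 2 statements merged into one kernel-verified Lean document; each statement's English description precedes it below -/
import Mathlib

section
/- Assume the support of ν equals the closure of an open bounded convex set Ω₀ ⊂ ℝ^N × ℝ^d, that ν is absolutely continuous with density in L^∞(Ω₀), and that the density of ν is bounded away from zero on compact subsets of Ω₀ (for every compact K ⊂ Ω₀ there is α_K > 0 with density ≥ α_K a.e. on K). Then the dual problem (D) admits at least one solution: there exist ψ ∈ L¹(ν), φ ∈ L¹(μ), b ∈ L¹(μ;ℝ^N) satisfying the constraint ψ(x,y)+φ(t)+b(t)·x ≥ t·y for all (x,y) ∈ supp(ν) and t ∈ [0,1]^d, which attain the infimum of 𝔼(ψ(X,Y)) + ∫_{[0,1]^d} φ dμ over all such triples. -/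
open MeasureTheory ProbabilityTheory Set
open scoped RealInnerProductSpace ENNReal

noncomputable section

/-- The support of a measure: points all of whose neighborhoods have positive measure. -/
def measSupport {E : Type*} [TopologicalSpace E] [MeasurableSpace E] (m : Measure E) :
    Set E := {x | ∀ s ∈ nhds x, 0 < m s}

/-!
Subtracting means normalises a competitor to `∫ φ dμ = 0` and `∫ b dμ = 0`; integrating the
constraint in `t` then bounds `ψ` from below. Consequently the nonnegative slack of the constraint
controls the `L¹(ν)` norm of the affine functions `φ t + b t · x`, so that, after truncating `φ t`
where it is large and discarding the directions of `(φ t, b t)` invisible to `ν`, near-optimal pairs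
`(φ, b)` are uniformly bounded. Those of cost at most `r` form a bounded convex subset of `L²(μ)`,
decreasing with `r`; nested sets of this kind have a strongly convergent diagonal sequence as `r`
decreases to the infimum. Along it the `ψ` are recovered in the limit by Fatou's lemma, and the
limit pair is modified on null sets to satisfy the constraint everywhere.
-/

section Development

open Filter Topology

lemma nonempty_iInter_closure_of_antitone_convex {H : Type*} [NormedAddCommGroup H]
    [InnerProductSpace ℝ H] [CompleteSpace H] {B : ℕ → Set H} (hanti : Antitone B)
    (hne : ∀ n, (B n).Nonempty) (hconv : ∀ n, Convex ℝ (B n))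
    (hbdd : Bornology.IsBounded (B 0)) :
    (⋂ n, closure (B n)).Nonempty := by
  have hmin : ∀ n, ∃ p ∈ closure (B n), ∀ q ∈ closure (B n), ‖p‖ ^ 2 ≤ ⟪p, q⟫ := by
    intro n
    obtain ⟨p, hp, hpmin⟩ := exists_norm_eq_iInf_of_complete_convex (hne n).closure
      isClosed_closure.isComplete (hconv n).closure 0
    refine ⟨p, hp, fun q hq ↦ ?_⟩
    have hvar := (norm_eq_iInf_iff_real_inner_le_zero (hconv n).closure hp).1 hpmin q hq
    rw [zero_sub, inner_neg_left, inner_sub_right, real_inner_self_eq_norm_sq] at hvar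
    linarith
  choose p hp hpvar using hmin
  have hmem : ∀ {n m}, n ≤ m → p m ∈ closure (B n) := fun hnm ↦ closure_mono (hanti hnm) (hp _)
  have hdist : ∀ n m, n ≤ m → ‖p n - p m‖ ^ 2 ≤ ‖p m‖ ^ 2 - ‖p n‖ ^ 2 := by
    intro n m hnm
    rw [norm_sub_sq_real]
    linarith [hpvar n (p m) (hmem hnm)]
  have hmono : Monotone fun n ↦ ‖p n‖ ^ 2 := fun n m hnm ↦
    sub_nonneg.1 ((sq_nonneg _).trans (hdist n m hnm))
  obtain ⟨M, hM⟩ := hbdd.closure.exists_norm_le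
  have hbddAbove : BddAbove (range fun n ↦ ‖p n‖ ^ 2) :=
    ⟨M ^ 2, forall_mem_range.2 fun n ↦
      pow_le_pow_left₀ (norm_nonneg _) (hM _ (hmem n.zero_le)) 2⟩
  obtain ⟨L, hlim, hle⟩ : ∃ L, Tendsto (fun n ↦ ‖p n‖ ^ 2) atTop (𝓝 L) ∧ ∀ n, ‖p n‖ ^ 2 ≤ L :=
    ⟨_, tendsto_atTop_ciSup hmono hbddAbove, le_ciSup hbddAbove⟩
  have hcauchy : CauchySeq p := by
    refine cauchySeq_of_le_tendsto_0' (fun n ↦ √(L - ‖p n‖ ^ 2)) ?_ ?_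
    · intro n m hnm
      rw [dist_eq_norm]
      exact Real.le_sqrt_of_sq_le ((hdist n m hnm).trans (sub_le_sub_right (hle m) _))
    · simpa only [sub_self, Real.sqrt_zero] using (hlim.const_sub L).sqrt
  obtain ⟨l, hl⟩ := cauchySeq_tendsto_of_complete hcauchy
  exact ⟨l, mem_iInter.2 fun n ↦
    isClosed_closure.mem_of_tendsto hl ((eventually_ge_atTop n).mono fun _ ↦ hmem)⟩

lemma exists_seq_mem_tendsto_ae_of_antitone_convex {T F : Type*} [MeasurableSpace T]
    {μ : Measure T} [NormedAddCommGroup F] [InnerProductSpace ℝ F] [CompleteSpace F]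
    {B : ℕ → Set (Lp F 2 μ)} (hanti : Antitone B) (hne : ∀ n, (B n).Nonempty)
    (hconv : ∀ n, Convex ℝ (B n)) (hbdd : Bornology.IsBounded (B 0)) :
    ∃ (g : ℕ → Lp F 2 μ) (l : Lp F 2 μ), (∀ n, g n ∈ B n) ∧
      ∀ᵐ t ∂μ, Tendsto (fun n ↦ g n t) atTop (𝓝 (l t)) := by
  obtain ⟨l, hl⟩ := nonempty_iInter_closure_of_antitone_convex hanti hne hconv hbdd
  have happrox : ∀ n : ℕ, ∃ g ∈ B n, dist g l < 1 / (n + 1) := fun n ↦ by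
    obtain ⟨g, hg, hgl⟩ := Metric.mem_closure_iff.1 (mem_iInter.1 hl n) _
      (Nat.one_div_pos_of_nat (α := ℝ))
    exact ⟨g, hg, dist_comm l g ▸ hgl⟩
  choose g hg hgl using happrox
  have htendsto : Tendsto g atTop (𝓝 l) := tendsto_iff_dist_tendsto_zero.2 <|
    squeeze_zero (fun _ ↦ dist_nonneg) (fun n ↦ (hgl n).le) tendsto_one_div_add_atTop_nhds_zero_nat
  obtain ⟨k, hk, hae⟩ := (tendstoInMeasure_of_tendsto_Lp htendsto).exists_seq_tendsto_ae
  exact ⟨g ∘ k, l, fun n ↦ hanti hk.le_apply (hg (k n)), hae⟩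

lemma const_le_integral_of_ae_le {Z : Type*} [MeasurableSpace Z] {ν : Measure Z}
    [IsProbabilityMeasure ν] {ψ : Z → ℝ} {a : ℝ} (hψ : Integrable ψ ν) (h : ∀ᵐ z ∂ν, a ≤ ψ z) :
    a ≤ ∫ z, ψ z ∂ν := by
  simpa only [integral_const, probReal_univ, one_smul] using
    integral_mono_ae (integrable_const a) hψ h

lemma lintegral_ofReal_add_const_le {Z : Type*} [MeasurableSpace Z] {ν : Measure Z}
    [IsProbabilityMeasure ν] {ψ : Z → ℝ} {a K : ℝ} (hψ : Integrable ψ ν)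
    (hlow : ∀ᵐ z ∂ν, -K ≤ ψ z) (hle : ∫ z, ψ z ∂ν ≤ a) :
    ∫⁻ z, ENNReal.ofReal (ψ z + K) ∂ν ≤ ENNReal.ofReal (a + K) := by
  rw [← ofReal_integral_eq_lintegral_ofReal (f := fun z ↦ ψ z + K)
    (hψ.add (integrable_const K)) (hlow.mono fun z hz ↦ neg_le_iff_add_nonneg.1 hz),
    integral_add hψ (integrable_const K), integral_const, probReal_univ, one_smul]
  gcongr

lemma exists_integrable_of_integral_le_of_tendsto {Z : Type*} [MeasurableSpace Z] {ν : Measure Z}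
    [IsProbabilityMeasure ν] {ψ : ℕ → Z → ℝ} {a : ℕ → ℝ} {K a₀ : ℝ}
    (hψ : ∀ n, Integrable (ψ n) ν) (hlow : ∀ n, ∀ᵐ z ∂ν, -K ≤ ψ n z)
    (hle : ∀ n, ∫ z, ψ n z ∂ν ≤ a n) (ha : Tendsto a atTop (𝓝 a₀)) :
    ∃ ψ₀ : Z → ℝ, Integrable ψ₀ ν ∧ ∫ z, ψ₀ z ∂ν ≤ a₀ ∧
      ∀ᵐ z ∂ν, ∀ (r : ℕ → ℝ) (r₀ : ℝ), (∀ n, r n ≤ ψ n z) → Tendsto r atTop (𝓝 r₀) →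
        r₀ ≤ ψ₀ z := by
  set f : ℕ → Z → ℝ≥0∞ := fun n z ↦ ENNReal.ofReal (ψ n z + K)
  set F : Z → ℝ≥0∞ := fun z ↦ liminf (fun n ↦ f n z) atTop
  have hf : ∀ n, AEMeasurable (f n) ν := fun n ↦ ((hψ n).aemeasurable.add_const K).ennreal_ofReal
  have hFmeas : AEMeasurable F ν := by
    simp only [F, liminf_eq_iSup_iInf_of_nat]
    exact .iSup fun _ ↦ .biInf _ (to_countable _) fun i _ ↦ hf i
  have hF_le : ∫⁻ z, F z ∂ν ≤ ENNReal.ofReal (a₀ + K) :=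
    calc ∫⁻ z, F z ∂ν ≤ liminf (fun n ↦ ∫⁻ z, f n z ∂ν) atTop := lintegral_liminf_le' hf
      _ ≤ liminf (fun n ↦ ENNReal.ofReal (a n + K)) atTop := liminf_le_liminf <| .of_forall fun n ↦
            lintegral_ofReal_add_const_le (hψ n) (hlow n) (hle n)
      _ = ENNReal.ofReal (a₀ + K) := (ENNReal.tendsto_ofReal (ha.add_const K)).liminf_eq
  have hF_top : ∫⁻ z, F z ∂ν ≠ ∞ := (hF_le.trans_lt ENNReal.ofReal_lt_top).ne
  have hF_fin : ∀ᵐ z ∂ν, F z < ∞ := ae_lt_top' hFmeas hF_top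
  have hF_int : Integrable (fun z ↦ (F z).toReal) ν :=
    integrable_toReal_of_lintegral_ne_top hFmeas hF_top
  have ha₀ : 0 ≤ a₀ + K := by
    refine ge_of_tendsto' (ha.add_const K) fun n ↦ ?_
    linarith [const_le_integral_of_ae_le (hψ n) (hlow n), hle n]
  refine ⟨fun z ↦ (F z).toReal - K, hF_int.sub (integrable_const K), ?_, ?_⟩
  · rw [integral_sub hF_int (integrable_const K), integral_toReal hFmeas hF_fin, integral_const,
      probReal_univ, one_smul, sub_le_iff_le_add]
    exact ENNReal.toReal_le_of_le_ofReal ha₀ hF_le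
  · filter_upwards [hF_fin] with z hz r r₀ hr hr₀
    rw [le_sub_iff_add_le, ← ENNReal.ofReal_le_iff_le_toReal hz.ne]
    calc ENNReal.ofReal (r₀ + K) = liminf (fun n ↦ ENNReal.ofReal (r n + K)) atTop :=
          (ENNReal.tendsto_ofReal (hr₀.add_const K)).liminf_eq.symm
      _ ≤ F z := liminf_le_liminf (.of_forall fun n ↦ by dsimp only [f]; gcongr; exact hr n)

lemma exists_continuousLinearMap_norm_le_integral_abs_inner {Z F : Type*} [MeasurableSpace Z]
    {ν : Measure Z} [NormedAddCommGroup F] [InnerProductSpace ℝ F] [FiniteDimensional ℝ F]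
    {ξ : Z → F} (hξ : Integrable ξ ν) :
    ∃ (π : F →L[ℝ] F) (C : ℝ), 0 ≤ C ∧ (∀ᵐ z ∂ν, ∀ v, ⟪π v, ξ z⟫ = ⟪v, ξ z⟫) ∧
      ∀ v, ‖π v‖ ≤ C * ∫ z, |⟪v, ξ z⟫| ∂ν := by
  let L : F →ₗ[ℝ] Lp ℝ 1 ν :=
    { toFun v := (hξ.const_inner v).toL1 _
      map_add' v w := (Integrable.toL1_eq_toL1_iff _ _ _
        ((hξ.const_inner v).add (hξ.const_inner w))).2
          (ae_of_all _ fun z ↦ inner_add_left v w (ξ z))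
      map_smul' a v := (Integrable.toL1_eq_toL1_iff _ _ _
        ((hξ.const_inner v).smul a)).2
          (ae_of_all _ fun z ↦ real_inner_smul_left v (ξ z) a) }
  obtain ⟨s, hs⟩ := L.rangeRestrict.exists_rightInverse_of_surjective L.range_rangeRestrict
  have hLs : ∀ v, L (s (L.rangeRestrict v)) = L v := fun v ↦
    congrArg Subtype.val (LinearMap.congr_fun hs (L.rangeRestrict v))
  let b := Module.finBasis ℝ F
  refine ⟨(s ∘ₗ L.rangeRestrict).toContinuousLinearMap, ‖s.toContinuousLinearMap‖,
    ContinuousLinearMap.opNorm_nonneg _, ?_, fun v ↦ ?_⟩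
  · have hbasis : ∀ᵐ z ∂ν, ∀ i, ⟪s (L.rangeRestrict (b i)), ξ z⟫ = ⟪b i, ξ z⟫ :=
      ae_all_iff.2 fun i ↦
        (Integrable.toL1_eq_toL1_iff _ _ (hξ.const_inner _) (hξ.const_inner _)).1 (hLs (b i))
    filter_upwards [hbasis] with z hz v
    have hext : (innerₗ F).flip (ξ z) ∘ₗ s ∘ₗ L.rangeRestrict = (innerₗ F).flip (ξ z) := b.ext hz
    exact LinearMap.congr_fun hext v
  · calc ‖s.toContinuousLinearMap (L.rangeRestrict v)‖
        ≤ ‖s.toContinuousLinearMap‖ * ‖L v‖ := s.toContinuousLinearMap.le_opNorm _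
      _ = ‖s.toContinuousLinearMap‖ * ∫ z, |⟪v, ξ z⟫| ∂ν :=
          congrArg (_ * ·) (L1.norm_of_fun_eq_integral_norm (hξ.const_inner v))

section DualPair

variable {Z T F : Type*} [MeasurableSpace Z] [MeasurableSpace T] [NormedAddCommGroup F]
  [InnerProductSpace ℝ F]

/-- Feasibility of a pair of potentials for the semi-infinite linear program with right-hand side
`c` and moment map `ξ`. The constraint is required for all `(z, t)` off null sets of `Z` and of `T`,
a notion invariant under null modifications of `ψ` and `g` but strong enough to allow a repair
to a constraint holding everywhere. -/
structure DualFeasible (ν : Measure Z) (μ : Measure T) (ξ : Z → F) (c : Z → T → ℝ)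
    (ψ : Z → ℝ) (g : T → F) : Prop where
  integrable_fst : Integrable ψ ν
  integrable_snd : Integrable g μ
  eventually_le : ∀ᶠ p in ae ν ×ˢ ae μ, c p.1 p.2 ≤ ψ p.1 + ⟪g p.2, ξ p.1⟫

/-- The objective of the dual program, `∫ ψ dν + ∫∫ ⟪g, ξ⟫ dν dμ`. -/
def dualCost (ν : Measure Z) (μ : Measure T) (ξ : Z → F) (ψ : Z → ℝ) (g : T → F) : ℝ :=
  ∫ z, ψ z ∂ν + ⟪∫ t, g t ∂μ, ∫ z, ξ z ∂ν⟫

lemma integral_inner_const [CompleteSpace F] {μ : Measure T} {g : T → F} (hg : Integrable g μ)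
    (v : F) : ∫ t, ⟪g t, v⟫ ∂μ = ⟪∫ t, g t ∂μ, v⟫ := by
  simp only [real_inner_comm v, integral_inner hg]

variable {ν : Measure Z} {μ : Measure T} {ξ : Z → F} {c : Z → T → ℝ} {ψ : Z → ℝ} {g : T → F}
  {K : ℝ}

namespace DualFeasible

lemma exists_integral_eq_zero [CompleteSpace F] [IsProbabilityMeasure μ]
    (h : DualFeasible ν μ ξ c ψ g) (hξ : Integrable ξ ν) :
    ∃ (ψ₁ : Z → ℝ) (g₁ : T → F), DualFeasible ν μ ξ c ψ₁ g₁ ∧ ∫ t, g₁ t ∂μ = 0 ∧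
      ∫ z, ψ₁ z ∂ν = dualCost ν μ ξ ψ g := by
  set a := ∫ t, g t ∂μ
  refine ⟨fun z ↦ ψ z + ⟪a, ξ z⟫, fun t ↦ g t - a, ⟨h.integrable_fst.add (hξ.const_inner a),
    h.integrable_snd.sub (integrable_const a), ?_⟩, ?_, ?_⟩
  · filter_upwards [h.eventually_le] with p hp
    rw [inner_sub_left]
    linarith
  · rw [integral_sub h.integrable_snd (integrable_const a), integral_const, probReal_univ,
      one_smul, sub_self]
  · rw [integral_add h.integrable_fst (hξ.const_inner a), integral_inner hξ, dualCost]

lemma neg_le [CompleteSpace F] [IsProbabilityMeasure μ] (h : DualFeasible ν μ ξ c ψ g)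
    (hg : ∫ t, g t ∂μ = 0) (hc : ∀ᶠ p in ae ν ×ˢ ae μ, |c p.1 p.2| ≤ K) :
    ∀ᵐ z ∂ν, -K ≤ ψ z := by
  filter_upwards [(h.eventually_le.and hc).curry] with z hz
  have hint : Integrable (fun t ↦ ⟪g t, ξ z⟫) μ := h.integrable_snd.inner_const _
  calc -K ≤ ∫ t, (ψ z + ⟪g t, ξ z⟫) ∂μ :=
        const_le_integral_of_ae_le ((integrable_const _).add hint) <|
          hz.mono fun t ht ↦ (abs_le.1 ht.2).1.trans ht.1
    _ = ψ z := by
        rw [integral_add (integrable_const _) hint, integral_const, probReal_univ, one_smul,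
          integral_inner_const h.integrable_snd, hg, inner_zero_left, add_zero]

lemma integral_abs_inner_le [CompleteSpace F] [IsProbabilityMeasure ν]
    (h : DualFeasible ν μ ξ c ψ g) (hξ : Integrable ξ ν) (hψ : ∀ᵐ z ∂ν, -K ≤ ψ z)
    (hc : ∀ᶠ p in ae ν ×ˢ ae μ, |c p.1 p.2| ≤ K) :
    ∀ᵐ t ∂μ, ∫ z, |⟪g t, ξ z⟫| ∂ν ≤ 2 * (∫ z, ψ z ∂ν + K) + ⟪g t, ∫ z, ξ z ∂ν⟫ := by
  filter_upwards [(eventually_swap_iff.1 (h.eventually_le.and hc)).curry] with t ht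
  have hint : Integrable (fun z ↦ ⟪g t, ξ z⟫) ν := hξ.const_inner _
  have hψK : Integrable (fun z ↦ ψ z + K) ν := h.integrable_fst.add (integrable_const K)
  calc ∫ z, |⟪g t, ξ z⟫| ∂ν ≤ ∫ z, (2 * (ψ z + K) + ⟪g t, ξ z⟫) ∂ν := by
        refine integral_mono_ae hint.abs ((hψK.const_mul 2).add hint) ?_
        filter_upwards [hψ, ht] with z hψz hz
        have hlow : -K ≤ ψ z + ⟪g t, ξ z⟫ := (abs_le.1 hz.2).1.trans hz.1
        exact abs_le.2 ⟨by linarith, by linarith⟩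
    _ = 2 * (∫ z, ψ z ∂ν + K) + ⟪g t, ∫ z, ξ z ∂ν⟫ := by
        rw [integral_add (hψK.const_mul 2) hint, integral_const_mul,
          integral_add h.integrable_fst (integrable_const K), integral_const, probReal_univ,
          one_smul, integral_inner hξ]

lemma exists_inner_integral_le [CompleteSpace F] [IsFiniteMeasure μ]
    (h : DualFeasible ν μ ξ c ψ g) (hψ : ∀ᵐ z ∂ν, -K ≤ ψ z)
    (hc : ∀ᶠ p in ae ν ×ˢ ae μ, |c p.1 p.2| ≤ K) {e : F} (he : ∀ᵐ z ∂ν, 1 ≤ ⟪e, ξ z⟫) :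
    ∃ g₁ : T → F, DualFeasible ν μ ξ c ψ g₁ ∧ dualCost ν μ ξ ψ g₁ ≤ dualCost ν μ ξ ψ g ∧
      ∀ t, ⟪g₁ t, ∫ z, ξ z ∂ν⟫ ≤ 2 * K * ⟪e, ∫ z, ξ z ∂ν⟫ := by
  classical
  set m := ∫ z, ξ z ∂ν
  let s : Set T := {t | ⟪g t, m⟫ ≤ 2 * K * ⟪e, m⟫}
  have hs : NullMeasurableSet s μ :=
    nullMeasurableSet_le (h.integrable_snd.inner_const m).aemeasurable aemeasurable_const
  let g₁ : T → F := s.piecewise g fun _ ↦ (2 * K) • e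
  have hg₁ : Integrable g₁ μ := by
    simp only [g₁, ← indicator_add_compl_eq_piecewise]
    exact (h.integrable_snd.indicator₀ hs).add ((integrable_const _).indicator₀ hs.compl)
  have hmin : ∀ t, ⟪g₁ t, m⟫ ≤ ⟪g t, m⟫ ∧ ⟪g₁ t, m⟫ ≤ 2 * K * ⟪e, m⟫ := by
    intro t
    by_cases ht : t ∈ s
    · simpa only [g₁, piecewise_eq_of_mem _ _ _ ht] using ⟨le_rfl, ht⟩
    · simpa only [g₁, piecewise_eq_of_notMem _ _ _ ht, real_inner_smul_left] using
        ⟨(not_le.1 ht).le, le_rfl⟩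
  refine ⟨g₁, ⟨h.integrable_fst, hg₁, ?_⟩, ?_, fun t ↦ (hmin t).2⟩
  · filter_upwards [h.eventually_le, hc, hψ.prod_inl (ae μ), he.prod_inl (ae μ)]
      with ⟨z, t⟩ hp hcp hψz hez
    by_cases ht : t ∈ s
    · simpa only [g₁, piecewise_eq_of_mem _ _ _ ht] using hp
    · simp only [g₁, piecewise_eq_of_notMem _ _ _ ht, real_inner_smul_left]
      nlinarith [abs_le.1 hcp, mul_le_mul_of_nonneg_left hez ((abs_nonneg _).trans hcp)]
  · refine add_le_add_right ?_ _
    rw [← integral_inner_const hg₁, ← integral_inner_const h.integrable_snd]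
    exact integral_mono (hg₁.inner_const m) (h.integrable_snd.inner_const m) fun t ↦ (hmin t).1

lemma continuousLinearMap_comp (h : DualFeasible ν μ ξ c ψ g) {π : F →L[ℝ] F}
    (hπ : ∀ᵐ z ∂ν, ∀ v, ⟪π v, ξ z⟫ = ⟪v, ξ z⟫) :
    DualFeasible ν μ ξ c ψ fun t ↦ π (g t) where
  integrable_fst := h.integrable_fst
  integrable_snd := π.integrable_comp h.integrable_snd
  eventually_le := by
    filter_upwards [h.eventually_le, hπ.prod_inl (ae μ)] with p hp hπp
    rwa [hπp]

end DualFeasible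

lemma dualCost_continuousLinearMap_comp [CompleteSpace F] (hg : Integrable g μ)
    (hξ : Integrable ξ ν) {π : F →L[ℝ] F} (hπ : ∀ᵐ z ∂ν, ∀ v, ⟪π v, ξ z⟫ = ⟪v, ξ z⟫) :
    dualCost ν μ ξ ψ (fun t ↦ π (g t)) = dualCost ν μ ξ ψ g := by
  rw [dualCost, dualCost, π.integral_comp_comm hg, ← integral_inner hξ, ← integral_inner hξ]
  exact congrArg _ (integral_congr_ae (hπ.mono fun z hz ↦ hz _))

/-- The slack of the constraint controls the `L¹(ν)` norm of `⟪g t, ξ⟫`, and the directions not seen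
by `ξ` are projected out. -/
lemma exists_uniform_bound_of_dualFeasible [FiniteDimensional ℝ F] [IsProbabilityMeasure ν]
    [IsProbabilityMeasure μ] (hξ : Integrable ξ ν) (hc : ∀ᶠ p in ae ν ×ˢ ae μ, |c p.1 p.2| ≤ K)
    {e : F} (he : ∀ᵐ z ∂ν, 1 ≤ ⟪e, ξ z⟫) (J : ℝ) :
    ∃ C, ∀ ψ g, DualFeasible ν μ ξ c ψ g → dualCost ν μ ξ ψ g ≤ J →
      ∃ ψ₁ g₁, DualFeasible ν μ ξ c ψ₁ g₁ ∧ (∀ᵐ z ∂ν, -K ≤ ψ₁ z) ∧ (∀ᵐ t ∂μ, ‖g₁ t‖ ≤ C) ∧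
        dualCost ν μ ξ ψ₁ g₁ ≤ dualCost ν μ ξ ψ g := by
  have := FiniteDimensional.complete ℝ F
  obtain ⟨π, C₀, hC₀, hπ, hπC⟩ := exists_continuousLinearMap_norm_le_integral_abs_inner hξ
  refine ⟨C₀ * (2 * (J + K) + 2 * K * ⟪e, ∫ z, ξ z ∂ν⟫), fun ψ g h hJ ↦ ?_⟩
  obtain ⟨ψ₁, g₁, h₁, hg₁, hcost₁⟩ := h.exists_integral_eq_zero hξ
  have hψ₁ := h₁.neg_le hg₁ hc
  obtain ⟨g₂, h₂, hcost₂, hg₂⟩ := h₁.exists_inner_integral_le hψ₁ hc he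
  refine ⟨ψ₁, fun t ↦ π (g₂ t), h₂.continuousLinearMap_comp hπ, hψ₁, ?_, ?_⟩
  · filter_upwards [h₂.integral_abs_inner_le hξ hψ₁ hc] with t ht
    refine (hπC _).trans (mul_le_mul_of_nonneg_left (ht.trans ?_) hC₀)
    linarith [hg₂ t]
  · calc dualCost ν μ ξ ψ₁ (fun t ↦ π (g₂ t)) = dualCost ν μ ξ ψ₁ g₂ :=
          dualCost_continuousLinearMap_comp h₂.integrable_snd hξ hπ
      _ ≤ dualCost ν μ ξ ψ₁ g₁ := hcost₂
      _ = dualCost ν μ ξ ψ g := by rw [dualCost, hg₁, inner_zero_left, add_zero, hcost₁]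

lemma DualFeasible.congr_snd (h : DualFeasible ν μ ξ c ψ g) {g₁ : T → F} (hg : g =ᵐ[μ] g₁) :
    DualFeasible ν μ ξ c ψ g₁ where
  integrable_fst := h.integrable_fst
  integrable_snd := h.integrable_snd.congr hg
  eventually_le := by
    filter_upwards [h.eventually_le, hg.prod_inr (ae ν)] with p hp hgp
    rwa [← hgp]

lemma dualCost_congr_snd {g₁ : T → F} (hg : g =ᵐ[μ] g₁) :
    dualCost ν μ ξ ψ g = dualCost ν μ ξ ψ g₁ := by
  rw [dualCost, dualCost, integral_congr_ae hg]

section Convexity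
variable {ψ₁ ψ₂ : Z → ℝ} {g₁ g₂ : T → F} {a b : ℝ}

lemma DualFeasible.convexCombination (h₁ : DualFeasible ν μ ξ c ψ₁ g₁)
    (h₂ : DualFeasible ν μ ξ c ψ₂ g₂) (ha : 0 ≤ a) (hb : 0 ≤ b) (hab : a + b = 1) :
    DualFeasible ν μ ξ c (a • ψ₁ + b • ψ₂) (a • g₁ + b • g₂) where
  integrable_fst := (h₁.integrable_fst.smul a).add (h₂.integrable_fst.smul b)
  integrable_snd := (h₁.integrable_snd.smul a).add (h₂.integrable_snd.smul b)
  eventually_le := by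
    filter_upwards [h₁.eventually_le, h₂.eventually_le] with p hp₁ hp₂
    calc c p.1 p.2 = a * c p.1 p.2 + b * c p.1 p.2 := by rw [← add_mul, hab, one_mul]
      _ ≤ a * (ψ₁ p.1 + ⟪g₁ p.2, ξ p.1⟫) + b * (ψ₂ p.1 + ⟪g₂ p.2, ξ p.1⟫) := by gcongr
      _ = (a • ψ₁ + b • ψ₂) p.1 + ⟪(a • g₁ + b • g₂) p.2, ξ p.1⟫ := by
        simp only [Pi.add_apply, Pi.smul_apply, smul_eq_mul, inner_add_left,
          real_inner_smul_left]
        ring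

lemma dualCost_linearCombination (hψ₁ : Integrable ψ₁ ν) (hψ₂ : Integrable ψ₂ ν)
    (hg₁ : Integrable g₁ μ) (hg₂ : Integrable g₂ μ) :
    dualCost ν μ ξ (a • ψ₁ + b • ψ₂) (a • g₁ + b • g₂) =
      a * dualCost ν μ ξ ψ₁ g₁ + b * dualCost ν μ ξ ψ₂ g₂ := by
  simp only [dualCost, integral_add' (hψ₁.smul a) (hψ₂.smul b),
    integral_add' (hg₁.smul a) (hg₂.smul b), Pi.smul_apply, integral_smul, smul_eq_mul,
    integral_const_mul, inner_add_left, real_inner_smul_left]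
  ring

end Convexity

/-- The second components, bounded by `C`, of the feasible pairs of cost at most `r` whose first
component is bounded below by `-K`. They are viewed in `L²(μ)` to have a Hilbert space at hand. -/
def dualSublevel (ν : Measure Z) (μ : Measure T) (ξ : Z → F) (c : Z → T → ℝ) (K C r : ℝ) :
    Set (Lp F 2 μ) :=
  {g | (∀ᵐ t ∂μ, ‖g t‖ ≤ C) ∧ ∃ ψ, DualFeasible ν μ ξ c ψ g ∧ (∀ᵐ z ∂ν, -K ≤ ψ z) ∧
    dualCost ν μ ξ ψ g ≤ r}

lemma dualSublevel_mono (ν : Measure Z) (μ : Measure T) (ξ : Z → F) (c : Z → T → ℝ) (K C : ℝ) :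
    Monotone (dualSublevel ν μ ξ c K C) :=
  fun _ _ hrs _ ⟨hC, ψ, h, hψ, hcost⟩ ↦ ⟨hC, ψ, h, hψ, hcost.trans hrs⟩

lemma isBounded_dualSublevel [IsFiniteMeasure μ] (C r : ℝ) :
    Bornology.IsBounded (dualSublevel ν μ ξ c K C r) :=
  isBounded_iff_forall_norm_le.2 ⟨_, fun _ hg ↦
    Lp.norm_le_of_ae_bound (abs_nonneg C) (hg.1.mono fun _ ht ↦ ht.trans (le_abs_self C))⟩

lemma convex_dualSublevel (C r : ℝ) : Convex ℝ (dualSublevel ν μ ξ c K C r) := by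
  rintro g₁ ⟨hC₁, ψ₁, h₁, hψ₁, hcost₁⟩ g₂ ⟨hC₂, ψ₂, h₂, hψ₂, hcost₂⟩ a b ha hb hab
  have hcoe : a • ⇑g₁ + b • ⇑g₂ =ᵐ[μ] ⇑(a • g₁ + b • g₂) :=
    (((Lp.coeFn_smul a g₁).add (Lp.coeFn_smul b g₂)).symm.trans (Lp.coeFn_add _ _).symm)
  refine ⟨?_, a • ψ₁ + b • ψ₂, (h₁.convexCombination h₂ ha hb hab).congr_snd hcoe, ?_, ?_⟩
  · filter_upwards [hC₁, hC₂, hcoe] with t ht₁ ht₂ ht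
    rw [← ht, ← mem_closedBall_zero_iff]
    exact convex_closedBall (0 : F) C (mem_closedBall_zero_iff.2 ht₁)
      (mem_closedBall_zero_iff.2 ht₂) ha hb hab
  · filter_upwards [hψ₁, hψ₂] with z hz₁ hz₂
    exact convex_Ici (-K) hz₁ hz₂ ha hb hab
  · rw [← dualCost_congr_snd hcoe, dualCost_linearCombination h₁.integrable_fst h₂.integrable_fst
      h₁.integrable_snd h₂.integrable_snd]
    exact convex_Iic r hcost₁ hcost₂ ha hb hab

lemma exists_dualFeasible_of_tendsto [IsProbabilityMeasure ν] [IsFiniteMeasure μ]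
    {ψ : ℕ → Z → ℝ} {g : ℕ → T → F} {g₀ : T → F} {a : ℕ → ℝ} {a₀ C : ℝ}
    (h : ∀ n, DualFeasible ν μ ξ c (ψ n) (g n)) (hψ : ∀ n, ∀ᵐ z ∂ν, -K ≤ ψ n z)
    (hC : ∀ n, ∀ᵐ t ∂μ, ‖g n t‖ ≤ C) (hg : ∀ᵐ t ∂μ, Tendsto (fun n ↦ g n t) atTop (𝓝 (g₀ t)))
    (hcost : ∀ n, dualCost ν μ ξ (ψ n) (g n) ≤ a n) (ha : Tendsto a atTop (𝓝 a₀)) :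
    ∃ ψ₀ : Z → ℝ, DualFeasible ν μ ξ c ψ₀ g₀ ∧ dualCost ν μ ξ ψ₀ g₀ ≤ a₀ := by
  have hg₀ : Integrable g₀ μ := by
    refine .of_bound (aestronglyMeasurable_of_tendsto_ae atTop
      (fun n ↦ (h n).integrable_snd.aestronglyMeasurable) hg) C ?_
    filter_upwards [hg, ae_all_iff.2 hC] with t ht hCt
    exact le_of_tendsto' ht.norm hCt
  have hlim : Tendsto (fun n ↦ ∫ t, g n t ∂μ) atTop (𝓝 (∫ t, g₀ t ∂μ)) :=
    tendsto_integral_of_dominated_convergence (fun _ ↦ C)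
      (fun n ↦ (h n).integrable_snd.aestronglyMeasurable) (integrable_const C) hC hg
  obtain ⟨ψ₀, hψ₀, hle, hsup⟩ := exists_integrable_of_integral_le_of_tendsto
    (fun n ↦ (h n).integrable_fst) hψ (fun n ↦ le_sub_iff_add_le.2 (hcost n))
    (ha.sub (hlim.inner tendsto_const_nhds))
  have : CountableInterFilter (ae ν ×ˢ ae μ) := by rw [Filter.prod_eq_inf]; infer_instance
  refine ⟨ψ₀, ⟨hψ₀, hg₀, ?_⟩, le_sub_iff_add_le.1 hle⟩
  filter_upwards [hsup.prod_inl (ae μ), hg.prod_inr (ae ν),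
    eventually_countable_forall.2 fun n ↦ (h n).eventually_le] with p hsup hgp hp
  exact sub_le_iff_le_add.1 <| hsup _ _ (fun n ↦ sub_le_iff_le_add.2 (hp n)) <|
    tendsto_const_nhds.sub (hgp.inner tendsto_const_nhds)

lemma exists_dualFeasible_of_nonempty_dualSublevel [CompleteSpace F] [IsProbabilityMeasure ν]
    [IsFiniteMeasure μ] {C r₀ : ℝ} {r : ℕ → ℝ} (hanti : Antitone r)
    (hr : Tendsto r atTop (𝓝 r₀)) (hne : ∀ n, (dualSublevel ν μ ξ c K C (r n)).Nonempty) :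
    ∃ ψ g, DualFeasible ν μ ξ c ψ g ∧ dualCost ν μ ξ ψ g ≤ r₀ := by
  obtain ⟨g, g₀, hg, hlim⟩ := exists_seq_mem_tendsto_ae_of_antitone_convex
    (fun _ _ hnm ↦ dualSublevel_mono ν μ ξ c K C (hanti hnm)) hne
    (fun n ↦ convex_dualSublevel C (r n)) (isBounded_dualSublevel C (r 0))
  choose hC ψ h hψ hcost using hg
  obtain ⟨ψ₀, h₀, hle⟩ := exists_dualFeasible_of_tendsto h hψ hC hlim hcost hr
  exact ⟨ψ₀, g₀, h₀, hle⟩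

lemma dualFeasible_zero_smul_const [IsFiniteMeasure μ]
    (hc : ∀ᶠ p in ae ν ×ˢ ae μ, |c p.1 p.2| ≤ K) {e : F} (he : ∀ᵐ z ∂ν, 1 ≤ ⟪e, ξ z⟫) :
    DualFeasible ν μ ξ c 0 fun _ ↦ K • e where
  integrable_fst := integrable_zero _ _ _
  integrable_snd := integrable_const _
  eventually_le := by
    filter_upwards [hc, he.prod_inl (ae μ)] with p hcp hep
    rw [Pi.zero_apply, zero_add, real_inner_smul_left]
    exact (le_abs_self _).trans <| hcp.trans <|
      le_mul_of_one_le_right ((abs_nonneg _).trans hcp) hep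

lemma DualFeasible.neg_le_dualCost [CompleteSpace F] [IsProbabilityMeasure ν]
    [IsProbabilityMeasure μ] (h : DualFeasible ν μ ξ c ψ g) (hξ : Integrable ξ ν)
    (hc : ∀ᶠ p in ae ν ×ˢ ae μ, |c p.1 p.2| ≤ K) : -K ≤ dualCost ν μ ξ ψ g := by
  obtain ⟨ψ₁, g₁, h₁, hg₁, hcost⟩ := h.exists_integral_eq_zero hξ
  exact hcost ▸ const_le_integral_of_ae_le h₁.integrable_fst (h₁.neg_le hg₁ hc)

lemma exists_dualFeasible_forall_dualCost_le [FiniteDimensional ℝ F] [IsProbabilityMeasure ν]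
    [IsProbabilityMeasure μ] (hξ : Integrable ξ ν) (hc : ∀ᶠ p in ae ν ×ˢ ae μ, |c p.1 p.2| ≤ K)
    {e : F} (he : ∀ᵐ z ∂ν, 1 ≤ ⟪e, ξ z⟫) :
    ∃ ψ g, DualFeasible ν μ ξ c ψ g ∧ (∀ᵐ z ∂ν, -K ≤ ψ z) ∧ (∃ C, ∀ᵐ t ∂μ, ‖g t‖ ≤ C) ∧
      ∀ ψ' g', DualFeasible ν μ ξ c ψ' g' → dualCost ν μ ξ ψ g ≤ dualCost ν μ ξ ψ' g' := by
  have := FiniteDimensional.complete ℝ F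
  let V : Set ℝ := {r | ∃ ψ g, DualFeasible ν μ ξ c ψ g ∧ dualCost ν μ ξ ψ g = r}
  have hV : V.Nonempty := ⟨_, _, _, dualFeasible_zero_smul_const hc he, rfl⟩
  have hVbdd : BddBelow V := ⟨-K, by rintro _ ⟨ψ, g, h, rfl⟩; exact h.neg_le_dualCost hξ hc⟩
  obtain ⟨r, hanti, hr, hrV⟩ := exists_seq_tendsto_sInf hV hVbdd
  obtain ⟨C, hC⟩ := exists_uniform_bound_of_dualFeasible hξ hc he (r 0)
  have hne : ∀ n, (dualSublevel ν μ ξ c K C (r n)).Nonempty := by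
    intro n
    obtain ⟨ψ, g, h, hrn⟩ := hrV n
    obtain ⟨ψ₁, g₁, h₁, hψ₁, hg₁, hcost₁⟩ := hC ψ g h (hrn.trans_le (hanti n.zero_le))
    have hLp : MemLp g₁ 2 μ := .of_bound h₁.integrable_snd.aestronglyMeasurable C hg₁
    have hcoe : g₁ =ᵐ[μ] hLp.toLp g₁ := hLp.coeFn_toLp.symm
    refine ⟨hLp.toLp g₁, ?_, ψ₁, h₁.congr_snd hcoe, hψ₁, ?_⟩
    · filter_upwards [hg₁, hcoe] with t ht hcoet
      rwa [← hcoet]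
    · rw [← dualCost_congr_snd hcoe, ← hrn]
      exact hcost₁
  obtain ⟨ψ, g, h, hcost⟩ := exists_dualFeasible_of_nonempty_dualSublevel hanti hr hne
  obtain ⟨ψ₁, g₁, h₁, hψ₁, hg₁, hcost₁⟩ := hC ψ g h (hcost.trans (csInf_le hVbdd (hrV 0)))
  exact ⟨ψ₁, g₁, h₁, hψ₁, ⟨C, hg₁⟩, fun ψ' g' h' ↦
    (hcost₁.trans hcost).trans (csInf_le hVbdd ⟨ψ', g', h', rfl⟩)⟩

lemma DualFeasible.exists_ae_eq_forall_le (h : DualFeasible ν μ ξ c ψ g)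
    (hψ : ∀ᵐ z ∂ν, -K ≤ ψ z) {C : ℝ} (hg : ∀ᵐ t ∂μ, ‖g t‖ ≤ C) {S : Set Z} {Q : Set T}
    (hc : ∀ z ∈ S, ∀ t ∈ Q, |c z t| ≤ K) {e : F} (he : ∀ z ∈ S, 1 ≤ ⟪e, ξ z⟫) :
    ∃ ψ₁ g₁, ψ =ᵐ[ν] ψ₁ ∧ g =ᵐ[μ] g₁ ∧ ∀ z ∈ S, ∀ t ∈ Q, c z t ≤ ψ₁ z + ⟪g₁ t, ξ z⟫ := by
  classical
  obtain ⟨A, hA, B, hB, hAB⟩ := eventually_prod_iff.1 h.eventually_le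
  refine ⟨fun z ↦ if A z ∧ -K ≤ ψ z then ψ z else K + |C| * ‖ξ z‖,
    fun t ↦ if B t ∧ ‖g t‖ ≤ C then g t else (2 * K) • e,
    (hA.and hψ).mono fun z hz ↦ (if_pos hz).symm, (hB.and hg).mono fun t ht ↦ (if_pos ht).symm,
    fun z hz t ht ↦ ?_⟩
  have hcK := hc z hz t ht
  have hC : 0 ≤ |C| * ‖ξ z‖ := by positivity
  have hK : 2 * K ≤ ⟪(2 * K) • e, ξ z⟫ := by
    rw [real_inner_smul_left]
    exact le_mul_of_one_le_right (by linarith [(abs_nonneg _).trans hcK]) (he z hz)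
  dsimp only
  split_ifs with hzA htB htB
  · exact hAB hzA.1 htB.1
  · linarith [le_of_abs_le hcK, hzA.2]
  · have hinner : |⟪g t, ξ z⟫| ≤ |C| * ‖ξ z‖ := (abs_real_inner_le_norm _ _).trans <|
      mul_le_mul_of_nonneg_right (htB.2.trans (le_abs_self C)) (norm_nonneg _)
    linarith [le_of_abs_le hcK, neg_le_of_abs_le hinner]
  · linarith [le_of_abs_le hcK, (abs_nonneg _).trans hcK]

lemma exists_forall_le_and_dualCost_le [FiniteDimensional ℝ F] [IsProbabilityMeasure ν]
    [IsProbabilityMeasure μ] (hξ : Integrable ξ ν) {S : Set Z} {Q : Set T}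
    (hS : ∀ᵐ z ∂ν, z ∈ S) (hQ : ∀ᵐ t ∂μ, t ∈ Q) (hc : ∀ z ∈ S, ∀ t ∈ Q, |c z t| ≤ K) {e : F}
    (he : ∀ z ∈ S, 1 ≤ ⟪e, ξ z⟫) :
    ∃ ψ g, Integrable ψ ν ∧ Integrable g μ ∧ (∀ z ∈ S, ∀ t ∈ Q, c z t ≤ ψ z + ⟪g t, ξ z⟫) ∧
      ∀ ψ' g', DualFeasible ν μ ξ c ψ' g' → dualCost ν μ ξ ψ g ≤ dualCost ν μ ξ ψ' g' := by
  have hc_ae : ∀ᶠ p in ae ν ×ˢ ae μ, |c p.1 p.2| ≤ K := (hS.prod_mk hQ).mono fun p hp ↦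
    hc p.1 hp.1 p.2 hp.2
  obtain ⟨ψ, g, h, hψ, ⟨C, hg⟩, hopt⟩ :=
    exists_dualFeasible_forall_dualCost_le hξ hc_ae (hS.mono he)
  obtain ⟨ψ₁, g₁, hψ₁, hg₁, hle⟩ := h.exists_ae_eq_forall_le hψ hg hc he
  refine ⟨ψ₁, g₁, h.integrable_fst.congr hψ₁, h.integrable_snd.congr hg₁, hle, ?_⟩
  rw [← dualCost_congr_snd hg₁, dualCost, ← integral_congr_ae hψ₁]
  exact hopt

end DualPair

section AffinePair

variable {Z T E : Type*} [MeasurableSpace Z] [MeasurableSpace T] [NormedAddCommGroup E]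
  [InnerProductSpace ℝ E]

lemma integrable_toLp_prodMk {μ : Measure T} {φ : T → ℝ} {b : T → E}
    (hφ : Integrable φ μ) (hb : Integrable b μ) :
    Integrable (fun t ↦ WithLp.toLp 2 (φ t, b t)) μ :=
  (WithLp.prodContinuousLinearEquiv 2 ℝ ℝ E).symm.toContinuousLinearMap.integrable_comp
    (hφ.prodMk hb)

lemma integral_toLp_prodMk [CompleteSpace E] {μ : Measure T} {φ : T → ℝ} {b : T → E}
    (hφ : Integrable φ μ) (hb : Integrable b μ) :
    ∫ t, WithLp.toLp 2 (φ t, b t) ∂μ = WithLp.toLp 2 (∫ t, φ t ∂μ, ∫ t, b t ∂μ) := by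
  rw [← integral_pair hφ hb]
  exact (WithLp.prodContinuousLinearEquiv 2 ℝ ℝ E).symm.integral_comp_comm _

lemma inner_toLp_one (u : WithLp 2 (ℝ × E)) (v : E) :
    ⟪u, WithLp.toLp 2 ((1 : ℝ), v)⟫ = u.fst + ⟪u.snd, v⟫ := by
  simp [WithLp.prod_inner_apply]

theorem exists_integral_add_integral_le_of_affine_constraint [FiniteDimensional ℝ E]
    {ν : Measure Z} {μ : Measure T} [IsProbabilityMeasure ν] [IsProbabilityMeasure μ] {x : Z → E}
    (hx : Integrable x ν) (hx₀ : ∫ z, x z ∂ν = 0) {S : Set Z} {Q : Set T} (hS : ∀ᵐ z ∂ν, z ∈ S)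
    (hQ : ∀ᵐ t ∂μ, t ∈ Q) {c : Z → T → ℝ} {K : ℝ} (hc : ∀ z ∈ S, ∀ t ∈ Q, |c z t| ≤ K) :
    ∃ (ψ : Z → ℝ) (φ : T → ℝ) (b : T → E), Integrable ψ ν ∧ Integrable φ μ ∧ Integrable b μ ∧
      (∀ z ∈ S, ∀ t ∈ Q, c z t ≤ ψ z + φ t + ⟪b t, x z⟫) ∧
      ∀ (ψ' : Z → ℝ) (φ' : T → ℝ) (b' : T → E), Integrable ψ' ν → Integrable φ' μ →
        Integrable b' μ → (∀ z ∈ S, ∀ t ∈ Q, c z t ≤ ψ' z + φ' t + ⟪b' t, x z⟫) →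
        ∫ z, ψ z ∂ν + ∫ t, φ t ∂μ ≤ ∫ z, ψ' z ∂ν + ∫ t, φ' t ∂μ := by
  have := FiniteDimensional.complete ℝ E
  let ξ : Z → WithLp 2 (ℝ × E) := fun z ↦ WithLp.toLp 2 (1, x z)
  have hξ : Integrable ξ ν := integrable_toLp_prodMk (integrable_const 1) hx
  have hcost : ∀ ψ {φ : T → ℝ} {b : T → E}, Integrable φ μ → Integrable b μ →
      dualCost ν μ ξ ψ (fun t ↦ WithLp.toLp 2 (φ t, b t)) = ∫ z, ψ z ∂ν + ∫ t, φ t ∂μ := by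
    intro ψ φ b hφ hb
    rw [dualCost, integral_toLp_prodMk hφ hb, integral_toLp_prodMk (integrable_const 1) hx, hx₀,
      integral_const, probReal_univ, one_smul, inner_toLp_one, inner_zero_right, add_zero,
      WithLp.toLp_fst]
  obtain ⟨ψ, g, hψ, hg, hle, hopt⟩ := exists_forall_le_and_dualCost_le hξ hS hQ hc
    (e := WithLp.toLp 2 (1, 0)) fun z _ ↦ by simp [ξ]
  have hg₁ : Integrable (fun t ↦ (g t).fst) μ := (WithLp.fstL 2 ℝ ℝ E).integrable_comp hg
  have hg₂ : Integrable (fun t ↦ (g t).snd) μ := (WithLp.sndL 2 ℝ ℝ E).integrable_comp hg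
  refine ⟨ψ, fun t ↦ (g t).fst, fun t ↦ (g t).snd, hψ, hg₁, hg₂, fun z hz t ht ↦ ?_,
    fun ψ' φ' b' hψ' hφ' hb' hle' ↦ ?_⟩
  · rw [add_assoc, ← inner_toLp_one]
    exact hle z hz t ht
  · rw [← hcost ψ hg₁ hg₂, ← hcost ψ' hφ' hb']
    refine hopt _ _ ⟨hψ', integrable_toLp_prodMk hφ' hb', ?_⟩
    filter_upwards [hS.prod_mk hQ] with p hp
    rw [inner_toLp_one, ← add_assoc]
    exact hle' _ hp.1 _ hp.2

end AffinePair

lemma measSupport_eq_support {E : Type*} [TopologicalSpace E] [MeasurableSpace E]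
    (m : Measure E) : measSupport m = m.support := by
  ext z
  rw [Measure.mem_support_iff_forall]
  rfl

section UnitCube

variable {ι : Type*}

/-- The cube `[0,1]^ι` in Euclidean space, on which the reference measure of the dual problem is
uniform. -/
def unitCube (ι : Type*) : Set (EuclideanSpace ℝ ι) := {u | ∀ i, u i ∈ Icc (0 : ℝ) 1}

lemma unitCube_eq_preimage_Icc : unitCube ι = EuclideanSpace.equiv ι ℝ ⁻¹' Icc 0 1 := by
  ext u
  simp only [unitCube, mem_ofPred_eq, mem_Icc, forall_and, mem_preimage, Pi.le_def, Pi.zero_apply,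
    Pi.one_apply, PiLp.coe_continuousLinearEquiv]

lemma isCompact_unitCube : IsCompact (unitCube ι) := by
  rw [unitCube_eq_preimage_Icc]
  exact (EuclideanSpace.equiv ι ℝ).toHomeomorph.isCompact_preimage.2 isCompact_Icc

lemma volume_unitCube [Fintype ι] : volume (unitCube ι) = 1 := by
  rw [unitCube_eq_preimage_Icc]
  exact ((EuclideanSpace.volume_preserving_symm_measurableEquiv_toLp ι).measure_preimage
    measurableSet_Icc.nullMeasurableSet).trans (by simp [Real.volume_Icc_pi])

end UnitCube

theorem existence_for_dual_problem_general
    {Ωs : Type*} [MeasurableSpace Ωs] (P : Measure Ωs) [IsProbabilityMeasure P]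
    {E F : Type*} [NormedAddCommGroup E] [InnerProductSpace ℝ E] [FiniteDimensional ℝ E]
    [MeasurableSpace E] [BorelSpace E] [NormedAddCommGroup F] [InnerProductSpace ℝ F]
    [SecondCountableTopology F] [MeasurableSpace F] [BorelSpace F]
    {X : Ωs → E} {Y : Ωs → F} (hX : Integrable X P) (hY : AEMeasurable Y P)
    (hYbdd : ∃ C : ℝ, ∀ᵐ ω ∂P, ‖Y ω‖ ≤ C) (hXcentered : ∫ ω, X ω ∂P = 0)
    {Q : Set F} (hQ : Bornology.IsBounded Q) {μ : Measure F} [IsProbabilityMeasure μ]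
    (hμ : ∀ᵐ t ∂μ, t ∈ Q) {ν : Measure (E × F)} (hν : ν = P.map fun ω ↦ (X ω, Y ω)) :
    ∃ (ψ : E × F → ℝ) (φ : F → ℝ) (b : F → E),
      Integrable ψ ν ∧ Integrable φ μ ∧ Integrable b μ ∧
      (∀ z ∈ measSupport ν, ∀ t ∈ Q, ψ z + φ t + ⟪b t, z.1⟫ ≥ ⟪t, z.2⟫) ∧
      (∀ (ψ' : E × F → ℝ) (φ' : F → ℝ) (b' : F → E),
         Integrable ψ' ν → Integrable φ' μ → Integrable b' μ →
         (∀ z ∈ measSupport ν, ∀ t ∈ Q, ψ' z + φ' t + ⟪b' t, z.1⟫ ≥ ⟪t, z.2⟫) →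
         ∫ z, ψ z ∂ν + ∫ t, φ t ∂μ ≤ ∫ z, ψ' z ∂ν + ∫ t, φ' t ∂μ) := by
  subst hν
  have hXY : AEMeasurable (fun ω ↦ (X ω, Y ω)) P := hX.aemeasurable.prodMk hY
  set ν := P.map fun ω ↦ (X ω, Y ω)
  have : IsProbabilityMeasure ν := Measure.isProbabilityMeasure_map hXY
  have hfst : Integrable Prod.fst ν :=
    (integrable_map_measure measurable_fst.aestronglyMeasurable hXY).2 hX
  have hfst₀ : ∫ z, z.1 ∂ν = 0 :=
    (integral_map hXY measurable_fst.aestronglyMeasurable).trans hXcentered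
  obtain ⟨C, hC⟩ := hYbdd
  obtain ⟨R, hR⟩ := hQ.exists_norm_le
  have hsnd : ν.support ⊆ {z | ‖z.2‖ ≤ C} := by
    have hclosed : IsClosed {z : E × F | ‖z.2‖ ≤ C} := isClosed_le (by fun_prop) (by fun_prop)
    exact Measure.support_subset_of_isClosed hclosed
      ((ae_map_iff hXY hclosed.measurableSet).2 hC)
  rw [measSupport_eq_support]
  refine exists_integral_add_integral_le_of_affine_constraint hfst hfst₀
    Measure.support_mem_ae hμ (K := R * C) fun z hz t ht ↦ ?_
  exact (abs_real_inner_le_norm t z.2).trans <|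
    mul_le_mul (hR t ht) (hsnd hz) (norm_nonneg _) ((norm_nonneg _).trans (hR t ht))

end Development

/-- **existence for the dual problem.** If `ν = Law(X,Y)` has support equal to the
closure of an open bounded convex set `Ω₀`, is absolutely continuous with an `L^∞` density, and
the density is bounded away from `0` on compact subsets of `Ω₀`, then the dual problem (D)
admits a solution `(ψ, φ, b)` with `ψ ∈ L¹(ν)`, `φ ∈ L¹(μ)`, `b ∈ L¹(μ; ℝ^N)` satisfying the
pointwise constraint and attaining the infimum. -/
theorem existence_for_dual_problem
    {Ωs : Type*} [MeasurableSpace Ωs] (P : Measure Ωs) [IsProbabilityMeasure P]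
    {N d : ℕ}
    (X : Ωs → EuclideanSpace ℝ (Fin N)) (Y : Ωs → EuclideanSpace ℝ (Fin d))
    (hX : Measurable X) (hY : Measurable Y)
    (hXbdd : ∃ C : ℝ, ∀ ω, ‖X ω‖ ≤ C) (hYbdd : ∃ C : ℝ, ∀ ω, ‖Y ω‖ ≤ C)
    (hXcentered : ∫ ω, X ω ∂P = 0)
    -- the cube [0,1]^d and the uniform measure μ on it
    (cube : Set (EuclideanSpace ℝ (Fin d)))
    (hcube : cube = {u : EuclideanSpace ℝ (Fin d) | ∀ i, u i ∈ Icc (0:ℝ) 1})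
    (μ : Measure (EuclideanSpace ℝ (Fin d))) (hμ : μ = volume.restrict cube)
    -- ν = Law(X,Y)
    (ν : Measure (EuclideanSpace ℝ (Fin N) × EuclideanSpace ℝ (Fin d)))
    (hν : ν = Measure.map (fun ω => (X ω, Y ω)) P)
    -- assumptions on ν
    (Ω₀ : Set (EuclideanSpace ℝ (Fin N) × EuclideanSpace ℝ (Fin d)))
    (hΩ₀open : IsOpen Ω₀) (hΩ₀bdd : Bornology.IsBounded Ω₀) (hΩ₀conv : Convex ℝ Ω₀)
    (hsupp : measSupport ν = closure Ω₀)
    (f : EuclideanSpace ℝ (Fin N) × EuclideanSpace ℝ (Fin d) → ℝ≥0∞)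
    (hf : Measurable f) (hdens : ν = volume.withDensity f)
    (hfbdd : ∃ C : ℝ≥0∞, C < ⊤ ∧ ∀ᵐ z ∂(volume :
      Measure (EuclideanSpace ℝ (Fin N) × EuclideanSpace ℝ (Fin d))), f z ≤ C)
    (hfbelow : ∀ K ⊆ Ω₀, IsCompact K →
      ∃ α : ℝ≥0∞, 0 < α ∧ ∀ᵐ z ∂((volume :
        Measure (EuclideanSpace ℝ (Fin N) × EuclideanSpace ℝ (Fin d))).restrict K), α ≤ f z) :
    ∃ (ψ : EuclideanSpace ℝ (Fin N) × EuclideanSpace ℝ (Fin d) → ℝ)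
      (φ : EuclideanSpace ℝ (Fin d) → ℝ)
      (b : EuclideanSpace ℝ (Fin d) → EuclideanSpace ℝ (Fin N)),
      Integrable ψ ν ∧ Integrable φ μ ∧ Integrable b μ ∧
      (∀ z ∈ measSupport ν, ∀ t ∈ cube, ψ z + φ t + ⟪b t, z.1⟫ ≥ ⟪t, z.2⟫) ∧
      (∀ (ψ' : EuclideanSpace ℝ (Fin N) × EuclideanSpace ℝ (Fin d) → ℝ)
         (φ' : EuclideanSpace ℝ (Fin d) → ℝ)
         (b' : EuclideanSpace ℝ (Fin d) → EuclideanSpace ℝ (Fin N)),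
         Integrable ψ' ν → Integrable φ' μ → Integrable b' μ →
         (∀ z ∈ measSupport ν, ∀ t ∈ cube, ψ' z + φ' t + ⟪b' t, z.1⟫ ≥ ⟪t, z.2⟫) →
         ∫ z, ψ z ∂ν + ∫ t, φ t ∂μ ≤ ∫ z, ψ' z ∂ν + ∫ t, φ' t ∂μ) := by
  obtain rfl : cube = unitCube (Fin d) := hcube
  subst hμ
  obtain ⟨C, hC⟩ := hXbdd
  have : IsProbabilityMeasure (volume.restrict (unitCube (Fin d))) :=
    ⟨(Measure.restrict_apply_univ _).trans volume_unitCube⟩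
  exact existence_for_dual_problem_general P (.of_bound hX.aestronglyMeasurable C (ae_of_all _ hC))
    hY.aemeasurable (hYbdd.imp fun _ ↦ ae_of_all _) hXcentered isCompact_unitCube.isBounded
    (ae_restrict_mem isCompact_unitCube.measurableSet) hν
end
end

section
/- The value sup{𝔼(∫₀¹ U_t Y dt) : t↦U_t nonincreasing, U_t ∈ [0,1], 𝔼(U_t)=1−t, 𝔼(U_t X)=0} coincides with the supremum of ∫∫ v_t(x,y)·y ν(dx,dy) dt over measurable deterministic functions (t,x,y) ↦ v_t(x,y) ∈ [0,1] such that for each fixed (x,y) the map t ↦ v_t(x,y) is nonincreasing, and for a.e. t ∈ [0,1]: ∫ v_t(x,y) ν(dx,dy) = 1−t and ∫ v_t(x,y) x ν(dx,dy) = 0. -/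
open MeasureTheory ProbabilityTheory Set
open scoped RealInnerProductSpace

noncomputable section

/-!
Let `Z = (X, Y)`. Read at rational times, a nonincreasing family `(U_t)` is a single random variable
with values in a standard Borel space of paths, so it has a regular conditional law given `Z`.
Averaging the right limits of a path against this law gives a version of `𝔼(U_t | Z)` that is
jointly measurable and nonincreasing in `t` for every value of `Z`. Passing to right limits alters
each path only at its countably many jumps, hence, by Fubini, for almost every `t` it alters `U_t`
only on a null set.

Conversely, `v_t(Z)` may violate the constraints on a null set of times. Dominated convergence makes
the expectations of its right limits right continuous in `t`, so the right limits satisfy the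
constraints at every `t < 1`; at `t = 1` they are replaced by `0`.
-/

section Regularization

open Filter
open scoped unitInterval Topology

lemma frequently_nhdsGT_of_ae {β : Type*} [LinearOrder β] [TopologicalSpace β] [OrderTopology β]
    [DenselyOrdered β] [NoMaxOrder β] [MeasurableSpace β] {μ : Measure β} [μ.IsOpenPosMeasure]
    {p : β → Prop} (hp : ∀ᵐ s ∂μ, p s) (t : β) : ∃ᶠ s in 𝓝[>] t, p s := by
  refine (nhdsGT_basis t).frequently_iff.mpr fun u hu => ?_
  obtain ⟨s, hs, htsu⟩ := (Measure.dense_of_ae hp).exists_between hu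
  exact ⟨s, htsu, hs⟩

/-- The right limit `⨆_{q > t} f q` at a real time `t` of a nonincreasing path known at rational
times only. Rational times make the path space `ℚ → I` standard Borel, which conditional
distributions require. -/
def ratRightLim (f : ℚ → I) (t : ℝ) : I :=
  ⨆ (q : ℚ) (_ : t < q), f q

lemma ratRightLim_antitone (f : ℚ → I) : Antitone (ratRightLim f) := fun _ _ hst =>
  iSup_mono fun _ => iSup_mono' fun ht => ⟨hst.trans_lt ht, le_rfl⟩

lemma measurable_ratRightLim : Measurable fun p : ℝ × (ℚ → I) => ratRightLim p.2 p.1 := by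
  refine Measurable.iSup fun q => ?_
  simp only [iSup_eq_if]
  exact Measurable.ite (measurableSet_lt measurable_fst measurable_const)
    ((measurable_pi_apply q).comp measurable_snd) measurable_const

lemma measurable_ratRightLim_left (t : ℝ) : Measurable fun f : ℚ → I => (ratRightLim f t : ℝ) :=
  (measurable_ratRightLim.comp measurable_prodMk_left).subtype_val

lemma integrable_ratRightLim (μ : Measure (ℚ → I)) [IsFiniteMeasure μ] (t : ℝ) :
    Integrable (fun f => (ratRightLim f t : ℝ)) μ :=
  .of_mem_Icc 0 1 (measurable_ratRightLim_left t).aemeasurable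
    (ae_of_all _ fun f => (ratRightLim f t).2)

lemma ratRightLim_eq_sSup_image_Ioi {w : ℝ → I} (hw : Antitone w) (t : ℝ) :
    ratRightLim (fun q => w q) t = sSup (w '' Ioi t) := by
  apply le_antisymm
  · exact iSup₂_le fun q hq => le_sSup (mem_image_of_mem w hq)
  · refine sSup_le (forall_mem_image.mpr fun s hs => ?_)
    obtain ⟨q, htq, hqs⟩ := exists_rat_btwn (mem_Ioi.mp hs)
    exact le_iSup₂_of_le q htq (hw hqs.le)

lemma tendsto_ratRightLim {w : ℝ → I} (hw : Antitone w) (t : ℝ) :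
    Tendsto w (𝓝[>] t) (𝓝 (ratRightLim (fun q => w q) t)) :=
  ratRightLim_eq_sSup_image_Ioi hw t ▸ hw.tendsto_nhdsGT t

lemma ae_ratRightLim_eq (μ : Measure ℝ) [NullSingletonClass μ] {w : ℝ → I} (hw : Antitone w) :
    ∀ᵐ t ∂μ, ratRightLim (fun q => w q) t = w t := by
  filter_upwards [hw.countable_not_continuousAt.ae_notMem μ] with t ht
  exact tendsto_nhds_unique (tendsto_ratRightLim hw t)
    ((not_not.mp ht).tendsto.mono_left nhdsWithin_le_nhds)

/-- The extension of a path on `[0, 1]` to the real line, by its initial value before time `0` and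
by `0` from time `1` on. Values are projected to `[0, 1]`. -/
def extendPath (u : ℝ → ℝ) (t : ℝ) : I :=
  if t < 1 then projIcc 0 1 zero_le_one (u (max t 0)) else 0

lemma extendPath_of_mem_Ico {u : ℝ → ℝ} {t : ℝ} (ht : t ∈ Ico (0 : ℝ) 1) (hu : u t ∈ I) :
    (extendPath u t : ℝ) = u t := by
  rw [extendPath, if_pos ht.2, max_eq_left ht.1, projIcc_of_mem _ hu]

lemma extendPath_of_one_le (u : ℝ → ℝ) {t : ℝ} (ht : 1 ≤ t) : extendPath u t = 0 :=
  if_neg ht.not_gt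

lemma extendPath_antitone {u : ℝ → ℝ} (hu : AntitoneOn u (Icc 0 1)) :
    Antitone (extendPath u) := by
  intro s t hst
  rcases lt_or_ge t 1 with ht | ht
  · have hs := hst.trans_lt ht
    simp only [extendPath, if_pos hs, if_pos ht]
    exact monotone_projIcc _ (hu ⟨le_max_right _ _, max_le hs.le zero_le_one⟩
      ⟨le_max_right _ _, max_le ht.le zero_le_one⟩ (max_le_max_right 0 hst))
  · exact extendPath_of_one_le u ht ▸ unitInterval.nonneg'

/-- The right-continuous regularization of a nonincreasing path on `[0, 1]`. -/
def regularizedPath (u : ℝ → ℝ) (t : ℝ) : I :=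
  ratRightLim (fun q => extendPath u q) t

lemma regularizedPath_one (u : ℝ → ℝ) : regularizedPath u 1 = 0 :=
  iSup₂_eq_bot.mpr fun _ hq => extendPath_of_one_le u hq.le

variable {α : Type*} [MeasurableSpace α] {U : ℝ → α → ℝ}

lemma measurable_extendPath (hU : Measurable (Function.uncurry U)) :
    Measurable fun p : ℝ × α => extendPath (U · p.2) p.1 :=
  Measurable.ite (measurableSet_lt measurable_fst measurable_const)
    (continuous_projIcc.measurable.comp
      (hU.comp ((measurable_fst.max measurable_const).prodMk measurable_snd)))
    measurable_const

lemma measurable_ratPath (hU : Measurable (Function.uncurry U)) :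
    Measurable fun (a : α) (q : ℚ) => extendPath (U · a) q :=
  measurable_pi_lambda _ fun _ => (measurable_extendPath hU).comp measurable_prodMk_left

lemma measurable_regularizedPath (hU : Measurable (Function.uncurry U)) :
    Measurable fun p : ℝ × α => regularizedPath (U · p.2) p.1 :=
  measurable_ratRightLim.comp
    (measurable_fst.prodMk ((measurable_ratPath hU).comp measurable_snd))

lemma ae_ae_regularizedPath_eq (μ : Measure α) [SFinite μ]
    (hU : Measurable (Function.uncurry U))
    (hanti : ∀ a, AntitoneOn (U · a) (Icc 0 1)) (h01 : ∀ t ∈ I, ∀ a, U t a ∈ I) :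
    ∀ᵐ t ∂volume.restrict I, ∀ᵐ a ∂μ, (regularizedPath (U · a) t : ℝ) = U t a := by
  have hregular : ∀ᵐ t : ℝ, ∀ᵐ a ∂μ, regularizedPath (U · a) t = extendPath (U · a) t :=
    (Measure.ae_ae_comm
      (p := fun t a => regularizedPath (U · a) t = extendPath (U · a) t)
      (measurableSet_eq_fun (measurable_regularizedPath hU) (measurable_extendPath hU))).mpr
      (ae_of_all μ fun a => ae_ratRightLim_eq volume (extendPath_antitone (hanti a)))
  filter_upwards [ae_restrict_of_ae hregular, ae_restrict_mem measurableSet_Icc,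
    Measure.ae_ne _ 1] with t hreg ht ht1
  filter_upwards [hreg] with a ha
  rw [ha, extendPath_of_mem_Ico ⟨ht.1, ht.2.lt_of_ne ht1⟩ (h01 t ht a)]

variable {F : Type*} [NormedAddCommGroup F] [NormedSpace ℝ F] {μ : Measure α}

lemma tendsto_integral_extendPath_smul (hU : Measurable (Function.uncurry U))
    (hanti : ∀ a, AntitoneOn (U · a) (Icc 0 1)) {φ : α → F} (hφ : Integrable φ μ) (t : ℝ) :
    Tendsto (fun s => ∫ a, (extendPath (U · a) s : ℝ) • φ a ∂μ) (𝓝[>] t)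
      (𝓝 (∫ a, (regularizedPath (U · a) t : ℝ) • φ a ∂μ)) := by
  refine tendsto_integral_filter_of_dominated_convergence (fun a => ‖φ a‖)
    (.of_forall fun s => ?_) (.of_forall fun s => ae_of_all μ fun a => ?_) hφ.norm
    (ae_of_all μ fun a => ?_)
  · have hs : Measurable fun a => extendPath (U · a) s :=
      (measurable_extendPath hU).comp measurable_prodMk_left
    exact hs.subtype_val.aestronglyMeasurable.smul hφ.aestronglyMeasurable
  · rw [norm_smul, Real.norm_of_nonneg (unitInterval.nonneg _)]
    exact mul_le_of_le_one_left (norm_nonneg _) (unitInterval.le_one _)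
  · exact ((continuous_subtype_val.tendsto _).comp
      (tendsto_ratRightLim (extendPath_antitone (hanti a)) t)).smul_const (φ a)

lemma integral_regularizedPath_smul_eq (hU : Measurable (Function.uncurry U))
    (hanti : ∀ a, AntitoneOn (U · a) (Icc 0 1)) (h01 : ∀ t ∈ I, ∀ a, U t a ∈ I)
    {φ : α → F} (hφ : Integrable φ μ) {c : ℝ → F} (hc : ContinuousOn c I) (hc1 : c 1 = 0)
    (h : ∀ᵐ t ∂volume.restrict I, ∫ a, U t a • φ a ∂μ = c t) {t : ℝ} (ht : t ∈ I) :
    ∫ a, (regularizedPath (U · a) t : ℝ) • φ a ∂μ = c t := by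
  rcases ht.2.eq_or_lt with rfl | ht1
  · simp [regularizedPath_one, hc1]
  have hIoo : Ioo t 1 ∈ 𝓝[>] t := Ioo_mem_nhdsGT ht1
  have hc_right : Tendsto c (𝓝[>] t) (𝓝 (c t)) :=
    (hc t ht).mono_of_mem_nhdsWithin
      (mem_of_superset hIoo fun s hs => ⟨ht.1.trans hs.1.le, hs.2.le⟩)
  have heq : ∃ᶠ s in 𝓝[>] t, ∫ a, (extendPath (U · a) s : ℝ) • φ a ∂μ = c s := by
    rw [ae_restrict_iff' measurableSet_Icc] at h
    refine ((frequently_nhdsGT_of_ae h t).and_eventually hIoo).mono fun s ⟨hs, hst⟩ => ?_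
    have hs0 : 0 ≤ s := ht.1.trans hst.1.le
    have hsI : s ∈ I := ⟨hs0, hst.2.le⟩
    have hext (a : α) : (extendPath (U · a) s : ℝ) = U s a :=
      extendPath_of_mem_Ico ⟨hs0, hst.2⟩ (h01 s hsI a)
    simpa only [hext] using hs hsI
  exact tendsto_nhds_unique_of_frequently_eq
    (tendsto_integral_extendPath_smul hU hanti hφ t) hc_right heq

end Regularization

section ConditionalFamily

open scoped unitInterval

lemma integral_map_smul {Ω E F : Type*} [MeasurableSpace Ω] [MeasurableSpace E]
    [NormedAddCommGroup F] [NormedSpace ℝ F] {P : Measure Ω} {Z : Ω → E} (hZ : Measurable Z)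
    {g : E → ℝ} (hg : Measurable g) {φ : E → F} (hφ : StronglyMeasurable φ) :
    ∫ z, g z • φ z ∂P.map Z = ∫ ω, g (Z ω) • φ (Z ω) ∂P :=
  integral_map hZ.aemeasurable (hg.stronglyMeasurable.smul hφ).aestronglyMeasurable

lemma integral_integral_condDistrib_smul {Ω E S F : Type*} [MeasurableSpace Ω] [MeasurableSpace E]
    [MeasurableSpace S] [StandardBorelSpace S] [Nonempty S] [NormedAddCommGroup F]
    [NormedSpace ℝ F] [CompleteSpace F] {P : Measure Ω} [IsFiniteMeasure P] {Z : Ω → E} {V : Ω → S}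
    (hZ : Measurable Z) (hV : Measurable V) {g : S → ℝ} (hg : StronglyMeasurable g) {φ : E → F}
    (hφ : StronglyMeasurable φ) (hint : Integrable (fun ω => g (V ω) • φ (Z ω)) P) :
    ∫ z, (∫ s, g s ∂condDistrib V Z P z) • φ z ∂P.map Z = ∫ ω, g (V ω) • φ (Z ω) ∂P := by
  have hZV : Measurable fun ω => (Z ω, V ω) := hZ.prodMk hV
  have hmeas : StronglyMeasurable fun p : E × S => g p.2 • φ p.1 :=
    (hg.comp_measurable measurable_snd).smul (hφ.comp_measurable measurable_fst)
  have hjoint : Integrable (fun p : E × S => g p.2 • φ p.1)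
      (P.map Z ⊗ₘ condDistrib V Z P) := by
    rw [compProd_map_condDistrib hV.aemeasurable]
    exact (integrable_map_measure hmeas.aestronglyMeasurable hZV.aemeasurable).mpr hint
  calc ∫ z, (∫ s, g s ∂condDistrib V Z P z) • φ z ∂P.map Z
      = ∫ z, ∫ s, g s • φ z ∂condDistrib V Z P z ∂P.map Z := by simp only [integral_smul_const]
    _ = ∫ p, g p.2 • φ p.1 ∂(P.map Z ⊗ₘ condDistrib V Z P) :=
        (Measure.integral_compProd hjoint).symm
    _ = ∫ ω, g (V ω) • φ (Z ω) ∂P := by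
        rw [compProd_map_condDistrib hV.aemeasurable,
          integral_map hZV.aemeasurable hmeas.aestronglyMeasurable]

variable {Ω E : Type*} [MeasurableSpace Ω] [MeasurableSpace E]

/-- A version of `(t, z) ↦ 𝔼(U_t | Z = z)` that is jointly measurable and nonincreasing in `t` for
every `z`. It averages regularized paths against one conditional law of the whole path given `Z`,
rather than conditioning at each time separately. -/
def conditionalFamily (P : Measure Ω) [IsFiniteMeasure P] (Z : Ω → E) (U : ℝ → Ω → ℝ)
    (t : ℝ) (z : E) : ℝ :=
  ∫ f, (ratRightLim f t : ℝ) ∂condDistrib (fun ω (q : ℚ) => extendPath (U · ω) q) Z P z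

variable (P : Measure Ω) [IsFiniteMeasure P] (Z : Ω → E) (U : ℝ → Ω → ℝ)

lemma measurable_conditionalFamily :
    Measurable (Function.uncurry (conditionalFamily P Z U)) := by
  have h : StronglyMeasurable fun p : (ℝ × E) × (ℚ → I) => (ratRightLim p.2 p.1.1 : ℝ) :=
    (measurable_ratRightLim.comp
      ((measurable_fst.comp measurable_fst).prodMk measurable_snd)).subtype_val.stronglyMeasurable
  exact (StronglyMeasurable.integral_kernel_prod_right
    (κ := (condDistrib (fun ω (q : ℚ) => extendPath (U · ω) q) Z P).comap Prod.snd measurable_snd)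
    h).measurable

lemma conditionalFamily_mem_Icc (t : ℝ) (z : E) : conditionalFamily P Z U t z ∈ Icc 0 1 := by
  refine ⟨integral_nonneg fun f => (ratRightLim f t).2.1, ?_⟩
  calc conditionalFamily P Z U t z
      ≤ ∫ _, (1 : ℝ) ∂condDistrib (fun ω (q : ℚ) => extendPath (U · ω) q) Z P z :=
        integral_mono (integrable_ratRightLim _ t) (integrable_const 1)
          fun f => (ratRightLim f t).2.2
    _ = 1 := by simp

lemma conditionalFamily_antitone (z : E) : Antitone (conditionalFamily P Z U · z) :=
  fun s t hst => integral_mono (integrable_ratRightLim _ t) (integrable_ratRightLim _ s)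
    fun f => ratRightLim_antitone f hst

variable {P Z U}

lemma integral_conditionalFamily_smul {F : Type*} [NormedAddCommGroup F] [NormedSpace ℝ F]
    [CompleteSpace F] (hZ : Measurable Z) (hU : Measurable (Function.uncurry U)) {φ : E → F}
    (hφ : StronglyMeasurable φ) (hφZ : Integrable (fun ω => φ (Z ω)) P) (t : ℝ) :
    ∫ z, conditionalFamily P Z U t z • φ z ∂P.map Z =
      ∫ ω, (regularizedPath (U · ω) t : ℝ) • φ (Z ω) ∂P := by
  have hg := measurable_ratRightLim_left t
  have hV := measurable_ratPath hU
  refine integral_integral_condDistrib_smul hZ hV hg.stronglyMeasurable hφ ?_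
  exact hφZ.bdd_smul 1 (hg.comp hV).aestronglyMeasurable
    (ae_of_all _ fun ω => (Real.norm_of_nonneg (unitInterval.nonneg _)).trans_le
      (unitInterval.le_one _))

lemma ae_integral_conditionalFamily_smul {F : Type*} [NormedAddCommGroup F] [NormedSpace ℝ F]
    [CompleteSpace F] (hZ : Measurable Z) (hU : Measurable (Function.uncurry U))
    (hanti : ∀ ω, AntitoneOn (U · ω) (Icc 0 1)) (h01 : ∀ t ∈ I, ∀ ω, U t ω ∈ I) {φ : E → F}
    (hφ : StronglyMeasurable φ) (hφZ : Integrable (fun ω => φ (Z ω)) P) :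
    ∀ᵐ t ∂volume.restrict I,
      ∫ z, conditionalFamily P Z U t z • φ z ∂P.map Z = ∫ ω, U t ω • φ (Z ω) ∂P := by
  filter_upwards [ae_ae_regularizedPath_eq P hU hanti h01] with t ht
  rw [integral_conditionalFamily_smul hZ hU hφ hφZ]
  exact integral_congr_ae (ht.mono fun ω hω => congrArg (· • φ (Z ω)) hω)

end ConditionalFamily

section Values

lemma integral_intervalIntegral_mul_swap {Ω : Type*} [MeasurableSpace Ω] {P : Measure Ω} [SFinite P]
    {U : ℝ → Ω → ℝ} {Y : Ω → ℝ} {a b C : ℝ} (hU : Measurable (Function.uncurry U))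
    (hC : ∀ t ∈ uIoc a b, ∀ ω, ‖U t ω‖ ≤ C) (hY : Integrable Y P) :
    ∫ ω, (∫ t in a..b, U t ω * Y ω) ∂P = ∫ t in a..b, ∫ ω, U t ω * Y ω ∂P := by
  refine (intervalIntegral_integral_swap ?_).symm
  have : IsFiniteMeasure (volume.restrict (uIoc a b)) := by rw [uIoc]; infer_instance
  refine (hY.comp_snd _).bdd_mul (c := C) hU.aestronglyMeasurable ?_
  filter_upwards [Measure.quasiMeasurePreserving_fst.ae (ae_restrict_mem measurableSet_uIoc)]
    with p hp using hC p.1 hp p.2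

lemma integral_intervalIntegral_mul_swap_of_mem_Icc {Ω : Type*} [MeasurableSpace Ω] {P : Measure Ω}
    [SFinite P] {U : ℝ → Ω → ℝ} {Y : Ω → ℝ} (hU : Measurable (Function.uncurry U))
    (h01 : ∀ t ∈ Icc (0 : ℝ) 1, ∀ ω, U t ω ∈ Icc (0 : ℝ) 1) (hY : Integrable Y P) :
    ∫ ω, (∫ t in (0 : ℝ)..1, U t ω * Y ω) ∂P = ∫ t in (0 : ℝ)..1, ∫ ω, U t ω * Y ω ∂P := by
  refine integral_intervalIntegral_mul_swap (C := 1) hU (fun t ht ω => ?_) hY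
  have hUt := h01 t (Ioc_subset_Icc_self (uIoc_of_le (zero_le_one' ℝ) ▸ ht)) ω
  exact (Real.norm_of_nonneg hUt.1).trans_le hUt.2

lemma intervalIntegral_congr_ae_Icc {E : Type*} [NormedAddCommGroup E] [NormedSpace ℝ E] {a b : ℝ}
    (hab : a ≤ b) {f g : ℝ → E} (h : ∀ᵐ t ∂volume.restrict (Icc a b), f t = g t) :
    ∫ t in a..b, f t = ∫ t in a..b, g t := by
  simp only [intervalIntegral.integral_of_le hab, ← integral_Icc_eq_integral_Ioc]
  exact integral_congr_ae h

variable {Ω F : Type*} [MeasurableSpace Ω] [NormedAddCommGroup F] [NormedSpace ℝ F]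
  [MeasurableSpace F]

/-- The values `𝔼(∫₀¹ U_t Y dt)` attained in the monotonicity-constrained problem by families of
random variables. -/
def randomFamilyValues (P : Measure Ω) (X : Ω → F) (Y : Ω → ℝ) : Set ℝ :=
  {r | ∃ U : ℝ → Ω → ℝ,
    Measurable (Function.uncurry U) ∧
    (∀ ω, AntitoneOn (fun t => U t ω) (Icc (0 : ℝ) 1)) ∧
    (∀ t ∈ Icc (0 : ℝ) 1, ∀ ω, U t ω ∈ Icc (0 : ℝ) 1) ∧
    (∀ t ∈ Icc (0 : ℝ) 1, ∫ ω, U t ω ∂P = 1 - t) ∧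
    (∀ t ∈ Icc (0 : ℝ) 1, ∫ ω, U t ω • X ω ∂P = 0) ∧
    r = ∫ ω, (∫ t in (0 : ℝ)..1, U t ω * Y ω) ∂P}

/-- The values `∫∫ v_t(x, y) y ν(dx, dy) dt` attained in the monotonicity-constrained problem by
deterministic functions of `(t, x, y)`. -/
def deterministicFamilyValues (ν : Measure (F × ℝ)) : Set ℝ :=
  {r | ∃ v : ℝ → F × ℝ → ℝ,
    Measurable (Function.uncurry v) ∧
    (∀ t z, v t z ∈ Icc (0 : ℝ) 1) ∧
    (∀ z, AntitoneOn (fun t => v t z) (Icc (0 : ℝ) 1)) ∧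
    (∀ᵐ t ∂(volume.restrict (Icc (0 : ℝ) 1)),
      (∫ z, v t z ∂ν = 1 - t) ∧ (∫ z, v t z • z.1 ∂ν = 0)) ∧
    r = ∫ t in (0 : ℝ)..1, ∫ z, v t z * z.2 ∂ν}

variable [BorelSpace F] [SecondCountableTopology F] {P : Measure Ω}
  [IsFiniteMeasure P] {X : Ω → F} {Y : Ω → ℝ}

lemma randomFamilyValues_subset [CompleteSpace F] (hX : Measurable X) (hY : Measurable Y)
    (hXint : Integrable X P) (hYint : Integrable Y P) :
    randomFamilyValues P X Y ⊆ deterministicFamilyValues (P.map fun ω => (X ω, Y ω)) := by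
  rintro _ ⟨U, hU, hanti, h01, hmean, hcov, rfl⟩
  have hZ : Measurable fun ω => (X ω, Y ω) := hX.prodMk hY
  refine ⟨conditionalFamily P (fun ω => (X ω, Y ω)) U, measurable_conditionalFamily P _ U,
    conditionalFamily_mem_Icc P _ U, fun z => (conditionalFamily_antitone P _ U z).antitoneOn _,
    ?_, ?_⟩
  · have hmass := ae_integral_conditionalFamily_smul (P := P) (φ := fun _ => (1 : ℝ))
      hZ hU hanti h01 stronglyMeasurable_const (integrable_const 1)
    have hmoment := ae_integral_conditionalFamily_smul hZ hU hanti h01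
      measurable_fst.stronglyMeasurable hXint
    simp only [smul_eq_mul, mul_one] at hmass
    filter_upwards [hmass, hmoment, ae_restrict_mem measurableSet_Icc] with t hmass_t hmoment_t ht
    exact ⟨hmass_t.trans (hmean t ht), hmoment_t.trans (hcov t ht)⟩
  · rw [integral_intervalIntegral_mul_swap_of_mem_Icc hU h01 hYint]
    refine intervalIntegral_congr_ae_Icc zero_le_one ?_
    filter_upwards [ae_integral_conditionalFamily_smul hZ hU hanti h01
      measurable_snd.stronglyMeasurable hYint] with t ht using ht.symm

lemma deterministicFamilyValues_subset (hX : Measurable X) (hY : Measurable Y)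
    (hXint : Integrable X P) (hYint : Integrable Y P) :
    deterministicFamilyValues (P.map fun ω => (X ω, Y ω)) ⊆ randomFamilyValues P X Y := by
  rintro _ ⟨v, hv, h01, hanti, hconstr, rfl⟩
  have hZ : Measurable fun ω => (X ω, Y ω) := hX.prodMk hY
  set V : ℝ → Ω → ℝ := fun t ω => v t (X ω, Y ω)
  set U : ℝ → Ω → ℝ := fun t ω => regularizedPath (V · ω) t
  have hvt : ∀ t, Measurable (v t) := fun t => hv.comp measurable_prodMk_left
  have hV : Measurable (Function.uncurry V) :=
    hv.comp (measurable_fst.prodMk (hZ.comp measurable_snd))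
  have hV01 : ∀ t ∈ Icc (0 : ℝ) 1, ∀ ω, V t ω ∈ Icc (0 : ℝ) 1 := fun t _ ω => h01 t _
  have hVanti : ∀ ω, AntitoneOn (V · ω) (Icc 0 1) := fun ω => hanti _
  have hU : Measurable (Function.uncurry U) := (measurable_regularizedPath hV).subtype_val
  have hU01 : ∀ t ω, U t ω ∈ Icc (0 : ℝ) 1 := fun t ω => (regularizedPath (V · ω) t).2
  refine ⟨U, hU, fun ω => (ratRightLim_antitone _).antitoneOn _, fun t _ => hU01 t, ?_, ?_, ?_⟩
  · have hmean : ∀ᵐ t ∂volume.restrict (Icc (0 : ℝ) 1), ∫ ω, V t ω • (1 : ℝ) ∂P = 1 - t := by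
      filter_upwards [hconstr] with t ht
      simp only [smul_eq_mul, mul_one]
      rw [← ht.1, integral_map hZ.aemeasurable (hvt t).aestronglyMeasurable]
    intro t ht
    simpa only [smul_eq_mul, mul_one] using integral_regularizedPath_smul_eq hV hVanti hV01
      (integrable_const 1) (c := fun t => 1 - t) (by fun_prop) (sub_self 1) hmean ht
  · have hcov : ∀ᵐ t ∂volume.restrict (Icc (0 : ℝ) 1), ∫ ω, V t ω • X ω ∂P = 0 := by
      filter_upwards [hconstr] with t ht
      exact (integral_map_smul hZ (hvt t) measurable_fst.stronglyMeasurable).symm.trans ht.2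
    intro t ht
    exact integral_regularizedPath_smul_eq hV hVanti hV01 hXint continuousOn_const rfl hcov ht
  · rw [integral_intervalIntegral_mul_swap_of_mem_Icc hU (fun t _ => hU01 t) hYint]
    refine intervalIntegral_congr_ae_Icc zero_le_one ?_
    filter_upwards [ae_ae_regularizedPath_eq P hV hVanti hV01] with t ht
    calc ∫ z, v t z * z.2 ∂P.map (fun ω => (X ω, Y ω))
        = ∫ ω, V t ω * Y ω ∂P :=
          integral_map_smul hZ (hvt t) measurable_snd.stronglyMeasurable
      _ = ∫ ω, U t ω * Y ω ∂P :=
          integral_congr_ae (ht.mono fun ω hω => congrArg (· * Y ω) hω.symm)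

theorem monotone_families_eq_deterministic_families_general [CompleteSpace F] (hX : Measurable X)
    (hY : Measurable Y) (hXint : Integrable X P) (hYint : Integrable Y P) :
    randomFamilyValues P X Y = deterministicFamilyValues (P.map fun ω => (X ω, Y ω)) :=
  (randomFamilyValues_subset hX hY hXint hYint).antisymm
    (deterministicFamilyValues_subset hX hY hXint hYint)

end Values

/-- The value `sup 𝔼(∫₀¹ U_t Y dt)` over families `(U_t)` of `[0,1]`-valued
random variables with `t ↦ U_t` nonincreasing, `𝔼(U_t) = 1 − t` and `𝔼(U_t X) = 0` coincides
with the supremum of `∫∫ v_t(x,y) y ν(dx,dy) dt` over deterministic measurable functions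
`(t,x,y) ↦ v_t(x,y) ∈ [0,1]`, nonincreasing in `t` for each fixed `(x,y)`, such that for a.e.
`t ∈ [0,1]`, `∫ v_t dν = 1 − t` and `∫ v_t(x,y) x ν(dx,dy) = 0`. -/
theorem monotone_families_eq_deterministic_families
    {Ωs : Type*} [MeasurableSpace Ωs] (P : Measure Ωs) [IsProbabilityMeasure P]
    {N : ℕ}
    (X : Ωs → EuclideanSpace ℝ (Fin N)) (Y : Ωs → ℝ)
    (hX : Measurable X) (hY : Measurable Y)
    (hXbdd : ∃ C : ℝ, ∀ ω, ‖X ω‖ ≤ C) (hYbdd : ∃ C : ℝ, ∀ ω, |Y ω| ≤ C)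
    (hXcentered : ∫ ω, X ω ∂P = 0)
    -- ν = Law(X,Y)
    (ν : Measure (EuclideanSpace ℝ (Fin N) × ℝ))
    (hν : ν = Measure.map (fun ω => (X ω, Y ω)) P) :
    sSup {r : ℝ | ∃ U : ℝ → Ωs → ℝ,
      Measurable (Function.uncurry U) ∧
      (∀ ω, AntitoneOn (fun t => U t ω) (Icc (0:ℝ) 1)) ∧
      (∀ t ∈ Icc (0:ℝ) 1, ∀ ω, U t ω ∈ Icc (0:ℝ) 1) ∧
      (∀ t ∈ Icc (0:ℝ) 1, ∫ ω, U t ω ∂P = 1 - t) ∧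
      (∀ t ∈ Icc (0:ℝ) 1, ∫ ω, U t ω • X ω ∂P = 0) ∧
      r = ∫ ω, (∫ t in (0:ℝ)..1, U t ω * Y ω) ∂P} =
    sSup {r : ℝ | ∃ v : ℝ → EuclideanSpace ℝ (Fin N) × ℝ → ℝ,
      Measurable (Function.uncurry v) ∧
      (∀ t z, v t z ∈ Icc (0:ℝ) 1) ∧
      (∀ z, AntitoneOn (fun t => v t z) (Icc (0:ℝ) 1)) ∧
      (∀ᵐ t ∂(volume.restrict (Icc (0:ℝ) 1)),
        (∫ z, v t z ∂ν = 1 - t) ∧ (∫ z, v t z • z.1 ∂ν = 0)) ∧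
      r = ∫ t in (0:ℝ)..1, ∫ z, v t z * z.2 ∂ν} := by
  subst hν
  obtain ⟨CX, hCX⟩ := hXbdd
  obtain ⟨CY, hCY⟩ := hYbdd
  exact congrArg sSup (monotone_families_eq_deterministic_families_general hX hY
    (.of_bound hX.aestronglyMeasurable CX (ae_of_all P hCX))
    (.of_bound hY.aestronglyMeasurable CY (ae_of_all P hCY)))
end
end
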